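/- arXiv:1611.03532 — 2 statements merged into one kernel-verified Lean document; each statement's English description precedes it below -/
import Mathlib

section
/- Let N ≥ 2, 0 < R₀ < R₁, p ∈ (1,∞), and let x, y ∈ ℝ^N with ‖x − y‖ ≤ R₁ − R₀ (so that the ball B_{R₀}(y) is contained in B_{R₁}(x)). Then λ₁(p, B_{R₁}(x) \ closure(B_{R₀}(y))) ≤ λ₁(p, B_{R₁}(0) \ closure(B_{R₀}(0))), i.e. the first eigenvalue of the eccentric spherical shell is at most that of the concentric spherical shell with the same radii. -/
open MeasureTheory Metric Set Filter
open scoped RealInnerProductSpace ENNReal Topology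

/-- The first Dirichlet eigenvalue of the p-Laplacian on `Ω`, defined variationally as the
infimum of Rayleigh quotients of smooth, not identically zero functions with compact
support contained in `Ω`. -/
noncomputable def lam1 {N : ℕ} (p : ℝ) (Ω : Set (EuclideanSpace ℝ (Fin N))) : ℝ :=
  sInf { r : ℝ | ∃ u : EuclideanSpace ℝ (Fin N) → ℝ,
    ContDiff ℝ (⊤ : ℕ∞) u ∧ u ≠ 0 ∧ HasCompactSupport u ∧ tsupport u ⊆ Ω ∧
    r = (∫ x in Ω, ‖gradient u x‖ ^ p) / (∫ x in Ω, |u x| ^ p) }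

/-- The first standard basis vector `e₁` of `ℝ^N`. -/
noncomputable def e1 (N : ℕ) : EuclideanSpace ℝ (Fin N) :=
  (WithLp.equiv 2 (Fin N → ℝ)).symm (fun i => if (i : ℕ) = 0 then 1 else 0)

/-- The eccentric annulus `Ω_s = B_{R₁}(0) \ closure (B_{R₀}(s e₁))`. -/
noncomputable def Om (N : ℕ) (R₀ R₁ s : ℝ) : Set (EuclideanSpace ℝ (Fin N)) :=
  ball 0 R₁ \ closure (ball (s • e1 N) R₀)

/-- `u` is a first eigenfunction of the p-Laplacian on `Ω` with eigenvalue `lam`: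
C¹ on an open set containing the closure of `Ω`, positive in `Ω`, zero on `∂Ω`, and a weak
solution of `−Δ_p u = lam · u^{p−1}`. -/
def IsFirstEigenfunction {N : ℕ} (p : ℝ) (Ω : Set (EuclideanSpace ℝ (Fin N)))
    (lam : ℝ) (u : EuclideanSpace ℝ (Fin N) → ℝ) : Prop :=
  (∃ V : Set (EuclideanSpace ℝ (Fin N)), IsOpen V ∧ closure Ω ⊆ V ∧ ContDiffOn ℝ 1 u V) ∧
  (∀ x ∈ Ω, 0 < u x) ∧
  (∀ x ∈ frontier Ω, u x = 0) ∧
  (∀ φ : EuclideanSpace ℝ (Fin N) → ℝ, ContDiff ℝ (⊤ : ℕ∞) φ → HasCompactSupport φ →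
    tsupport φ ⊆ Ω →
    ∫ x in Ω, ‖gradient u x‖ ^ (p - 2) * ⟪gradient u x, gradient φ x⟫ =
      lam * ∫ x in Ω, (u x) ^ (p - 1) * φ x)

/-!
Let `σ` be the reflection exchanging `x` and `y`. Polarization replaces `u` by the larger of `u`
and `u ∘ σ` on the side of `x` and by the smaller one on the side of `y`. It preserves `∫ |u|ᵖ`,
does not increase `∫ ‖Du‖ᵖ`, and carries nonnegative functions supported in the concentric shell
about `x` to functions supported in the polarized shell, which lies in the ball about `x` and
avoids the hole about `y`. Since an eigenvalue can only decrease when the domain grows, this gives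
the inequality.

Polarization does not preserve smoothness, so it is approximated. Replacing `|·|` by a smooth even
1-Lipschitz function vanishing near `0` makes the maximum and the minimum smooth; they coincide
where `u` is close to `u ∘ σ`, in particular near the bisector, so the two halves glue smoothly.
At `z` and `σ z` the new gradients are convex combinations of the old ones with exchanged weights,
and convexity of `t ↦ tᵖ` gives the energy inequality.
-/

open scoped ContDiff

section SoftAbs

variable {ε s t : ℝ}

/-- A smooth odd version of the sign function: it vanishes on `[-ε, ε]` and equals `±1` outside
`(-2ε, 2ε)`. -/
noncomputable def softSign (ε s : ℝ) : ℝ :=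
  Real.smoothTransition (s / ε - 1) - Real.smoothTransition (-s / ε - 1)

/-- A smooth, even, 1-Lipschitz version of the absolute value: it is the primitive of `softSign ε`,
vanishes on `[-ε, ε]` and stays within `2ε` below `|·|`. -/
noncomputable def softAbs (ε t : ℝ) : ℝ := ∫ s in (0 : ℝ)..t, softSign ε s

lemma contDiff_softSign : ContDiff ℝ ∞ (softSign ε) :=
  (Real.smoothTransition.contDiff.comp (by fun_prop)).sub
    (Real.smoothTransition.contDiff.comp (by fun_prop))

lemma softSign_neg : softSign ε (-s) = -softSign ε s := by
  simp only [softSign, neg_neg, neg_sub]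

lemma abs_softSign_le_one : |softSign ε s| ≤ 1 := by
  have h₁ := Real.smoothTransition.nonneg (s / ε - 1)
  have h₂ := Real.smoothTransition.le_one (s / ε - 1)
  have h₃ := Real.smoothTransition.nonneg (-s / ε - 1)
  have h₄ := Real.smoothTransition.le_one (-s / ε - 1)
  exact abs_le.2 ⟨by unfold softSign; linarith, by unfold softSign; linarith⟩

lemma softSign_eq_smoothTransition (hε : 0 < ε) (hs : -ε ≤ s) :
    softSign ε s = Real.smoothTransition (s / ε - 1) := by
  have : -s / ε ≤ 1 := by rw [div_le_one hε]; linarith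
  rw [softSign, Real.smoothTransition.zero_of_nonpos (x := -s / ε - 1) (by linarith), sub_zero]

lemma softSign_of_abs_le (hε : 0 < ε) (hs : |s| ≤ ε) : softSign ε s = 0 := by
  have : s / ε ≤ 1 := (div_le_one hε).2 (abs_le.1 hs).2
  rw [softSign_eq_smoothTransition hε (abs_le.1 hs).1,
    Real.smoothTransition.zero_of_nonpos (by linarith)]

lemma softSign_of_two_mul_le (hε : 0 < ε) (hs : 2 * ε ≤ s) : softSign ε s = 1 := by
  have : 2 ≤ s / ε := (le_div_iff₀ hε).2 hs
  rw [softSign_eq_smoothTransition hε (by linarith),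
    Real.smoothTransition.one_of_one_le (by linarith)]

lemma hasDerivAt_softAbs : HasDerivAt (softAbs ε) (softSign ε t) t :=
  contDiff_softSign.continuous.integral_hasStrictDerivAt 0 t |>.hasDerivAt

lemma contDiff_softAbs : ContDiff ℝ ∞ (softAbs ε) := by
  rw [contDiff_infty_iff_deriv, funext fun t ↦ (hasDerivAt_softAbs (ε := ε) (t := t)).deriv]
  exact ⟨fun t ↦ hasDerivAt_softAbs.differentiableAt, contDiff_softSign⟩

lemma softAbs_neg : softAbs ε (-t) = softAbs ε t := by
  have h := intervalIntegral.integral_comp_neg (a := 0) (b := t) (softSign ε)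
  simp only [softSign_neg, intervalIntegral.integral_neg, neg_zero] at h
  rw [softAbs, intervalIntegral.integral_symm, ← h, neg_neg, softAbs]

lemma softAbs_abs : softAbs ε |t| = softAbs ε t := by
  rcases abs_choice t with h | h <;> rw [h]
  exact softAbs_neg

lemma softAbs_of_abs_le (hε : 0 < ε) (ht : |t| ≤ ε) : softAbs ε t = 0 := by
  refine (intervalIntegral.integral_congr fun s hs ↦ softSign_of_abs_le hε ?_).trans
    intervalIntegral.integral_zero
  have := abs_sub_left_of_mem_uIcc hs
  simp only [sub_zero] at this
  exact this.trans ht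

lemma abs_softAbs_le_abs : |softAbs ε t| ≤ |t| := by
  simpa only [softAbs, Real.norm_eq_abs, one_mul, sub_zero] using
    intervalIntegral.norm_integral_le_of_norm_le_const (C := 1) (f := softSign ε) (a := 0) (b := t)
      fun _ _ ↦ abs_softSign_le_one

lemma softAbs_nonneg (hε : 0 < ε) : 0 ≤ softAbs ε t := by
  rw [← softAbs_abs]
  refine intervalIntegral.integral_nonneg (abs_nonneg t) fun s hs ↦ ?_
  rw [softSign_eq_smoothTransition hε (by linarith [hs.1])]
  exact Real.smoothTransition.nonneg _

lemma abs_sub_two_mul_le_softAbs (hε : 0 < ε) : |t| - 2 * ε ≤ softAbs ε t := by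
  rcases le_total |t| (2 * ε) with ht | ht
  · linarith [softAbs_nonneg hε (t := t)]
  have hint (a b : ℝ) : IntervalIntegrable (softSign ε) volume a b :=
    contDiff_softSign.continuous.intervalIntegrable a b
  calc |t| - 2 * ε
      = ∫ s in (2 * ε)..|t|, softSign ε s := by
        rw [intervalIntegral.integral_congr (g := fun _ ↦ (1 : ℝ)) fun s hs ↦
          softSign_of_two_mul_le hε (uIcc_of_le ht ▸ hs).1]
        simp
    _ ≤ softAbs ε (2 * ε) + ∫ s in (2 * ε)..|t|, softSign ε s :=
        le_add_of_nonneg_left (softAbs_nonneg hε)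
    _ = softAbs ε t := by
        rw [← softAbs_abs (t := t)]
        exact intervalIntegral.integral_add_adjacent_intervals (hint _ _) (hint _ _)

lemma abs_softAbs_sub_abs_le (hε : 0 < ε) : |softAbs ε t - (|t|)| ≤ 2 * ε := by
  have hle := le_of_abs_le (abs_softAbs_le_abs (ε := ε) (t := t))
  rw [abs_le]
  constructor <;> linarith [abs_sub_two_mul_le_softAbs hε (t := t)]

/-- A smooth approximation of `max a b`, equal to the mean of `a` and `b` when `|a - b| ≤ ε`. -/
noncomputable def softMax (ε a b : ℝ) : ℝ := (a + b + softAbs ε (a - b)) / 2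

/-- A smooth approximation of `min a b`, equal to the mean of `a` and `b` when `|a - b| ≤ ε`. -/
noncomputable def softMin (ε a b : ℝ) : ℝ := (a + b - softAbs ε (a - b)) / 2

variable {a b : ℝ}

lemma softMax_comm : softMax ε a b = softMax ε b a := by
  rw [softMax, softMax, ← neg_sub b a, softAbs_neg, add_comm a]

lemma softMin_comm : softMin ε a b = softMin ε b a := by
  rw [softMin, softMin, ← neg_sub b a, softAbs_neg, add_comm a]

lemma softMax_eq_softMin (hε : 0 < ε) (h : |a - b| ≤ ε) : softMax ε a b = softMin ε a b := by
  simp only [softMax, softMin, softAbs_of_abs_le hε h, add_zero, sub_zero]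

lemma abs_softMax_sub_max_le (hε : 0 < ε) : |softMax ε a b - max a b| ≤ ε := by
  have hmax := sup_eq_half_smul_add_add_abs_sub' ℝ a b
  rw [abs_sub_comm b, smul_eq_mul] at hmax
  have h := abs_le.1 (abs_softAbs_sub_abs_le hε (t := a - b))
  rw [hmax, softMax, abs_le]
  constructor <;> linarith

lemma abs_softMin_sub_min_le (hε : 0 < ε) : |softMin ε a b - min a b| ≤ ε := by
  have hmin := inf_eq_half_smul_add_sub_abs_sub' ℝ a b
  rw [abs_sub_comm b, smul_eq_mul] at hmin
  have h := abs_le.1 (abs_softAbs_sub_abs_le hε (t := a - b))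
  rw [hmin, softMin, abs_le]
  constructor <;> linarith

lemma abs_softMax_le : |softMax ε a b| ≤ |a| + |b| := by
  have h : |softAbs ε (a - b)| ≤ |a| + |b| := abs_softAbs_le_abs.trans (abs_sub a b)
  have := abs_add_le (a + b) (softAbs ε (a - b))
  rw [softMax, abs_div, abs_two]
  linarith [abs_add_le a b]

lemma abs_softMin_le : |softMin ε a b| ≤ |a| + |b| := by
  have h : |softAbs ε (a - b)| ≤ |a| + |b| := abs_softAbs_le_abs.trans (abs_sub a b)
  have := abs_sub (a + b) (softAbs ε (a - b))
  rw [softMin, abs_div, abs_two]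
  linarith [abs_add_le a b]

end SoftAbs

section TwoPoint

lemma norm_smul_add_smul_rpow_le {F : Type*} [SeminormedAddCommGroup F] [NormedSpace ℝ F]
    {p a b : ℝ} (hp : 1 ≤ p) (ha : 0 ≤ a) (hb : 0 ≤ b) (hab : a + b = 1) (v w : F) :
    ‖a • v + b • w‖ ^ p ≤ a * ‖v‖ ^ p + b * ‖w‖ ^ p := by
  calc ‖a • v + b • w‖ ^ p
      ≤ (a • ‖v‖ + b • ‖w‖) ^ p := by
        have := convexOn_univ_norm.2 (mem_univ v) (mem_univ w) ha hb hab
        gcongr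
    _ ≤ a * ‖v‖ ^ p + b * ‖w‖ ^ p :=
        (convexOn_rpow hp).2 (norm_nonneg v) (norm_nonneg w) ha hb hab

variable {E : Type*} [NormedAddCommGroup E] [NormedSpace ℝ E] {u v : E → ℝ} {z : E} {ε : ℝ}

lemma contDiff_softMax (hu : ContDiff ℝ ∞ u) (hv : ContDiff ℝ ∞ v) :
    ContDiff ℝ ∞ fun z ↦ softMax ε (u z) (v z) :=
  ((hu.add hv).add (contDiff_softAbs.comp (hu.sub hv))).div_const 2

lemma contDiff_softMin (hu : ContDiff ℝ ∞ u) (hv : ContDiff ℝ ∞ v) :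
    ContDiff ℝ ∞ fun z ↦ softMin ε (u z) (v z) :=
  ((hu.add hv).sub (contDiff_softAbs.comp (hu.sub hv))).div_const 2

lemma norm_fderiv_softAbs_comp_le (hu : DifferentiableAt ℝ u z) :
    ‖fderiv ℝ (fun z ↦ softAbs ε (u z)) z‖ ≤ ‖fderiv ℝ u z‖ := by
  have h : fderiv ℝ (fun z ↦ softAbs ε (u z)) z = softSign ε (u z) • fderiv ℝ u z :=
    (hasDerivAt_softAbs.comp_hasFDerivAt z hu.hasFDerivAt).fderiv
  rw [h, norm_smul]
  exact mul_le_of_le_one_left (norm_nonneg _) abs_softSign_le_one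

-- The two derivatives are `a • u' + b • v'` and `b • u' + a • v'` with weights `a + b = 1`.
lemma norm_fderiv_softMax_rpow_add_norm_fderiv_softMin_rpow_le {p : ℝ} (hp : 1 ≤ p)
    (hu : DifferentiableAt ℝ u z) (hv : DifferentiableAt ℝ v z) :
    ‖fderiv ℝ (fun z ↦ softMax ε (u z) (v z)) z‖ ^ p +
        ‖fderiv ℝ (fun z ↦ softMin ε (u z) (v z)) z‖ ^ p ≤
      ‖fderiv ℝ u z‖ ^ p + ‖fderiv ℝ v z‖ ^ p := by
  set c := softSign ε (u z - v z)
  obtain ⟨hc₁, hc₂⟩ : -1 ≤ c ∧ c ≤ 1 := abs_le.1 abs_softSign_le_one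
  have hsum := hu.hasFDerivAt.add hv.hasFDerivAt
  have habs : HasFDerivAt (fun z ↦ softAbs ε (u z - v z)) (c • (fderiv ℝ u z - fderiv ℝ v z)) z :=
    hasDerivAt_softAbs.comp_hasFDerivAt z (hu.hasFDerivAt.sub hv.hasFDerivAt)
  have hmax : fderiv ℝ (fun z ↦ softMax ε (u z) (v z)) z =
      ((1 + c) / 2) • fderiv ℝ u z + ((1 - c) / 2) • fderiv ℝ v z := by
    refine (((hsum.add habs).mul_const 2⁻¹).fderiv).trans ?_
    module
  have hmin : fderiv ℝ (fun z ↦ softMin ε (u z) (v z)) z =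
      ((1 - c) / 2) • fderiv ℝ u z + ((1 + c) / 2) • fderiv ℝ v z := by
    refine (((hsum.sub habs).mul_const 2⁻¹).fderiv).trans ?_
    module
  have h₁ := norm_smul_add_smul_rpow_le hp (a := (1 + c) / 2) (b := (1 - c) / 2)
    (by linarith) (by linarith) (by ring) (fderiv ℝ u z) (fderiv ℝ v z)
  have h₂ := norm_smul_add_smul_rpow_le hp (a := (1 - c) / 2) (b := (1 + c) / 2)
    (by linarith) (by linarith) (by ring) (fderiv ℝ u z) (fderiv ℝ v z)
  rw [hmax, hmin]
  linarith

end TwoPoint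

section AffineIsometry

variable {E : Type*} [NormedAddCommGroup E] [NormedSpace ℝ E]

lemma contDiff_affineIsometryEquiv (φ : E ≃ᵃⁱ[ℝ] E) : ContDiff ℝ ∞ φ :=
  φ.toContinuousAffineEquiv.toContinuousAffineMap.contDiff

lemma norm_fderiv_comp_affineIsometryEquiv (φ : E ≃ᵃⁱ[ℝ] E) (u : E → ℝ) (z : E) :
    ‖fderiv ℝ (u ∘ φ) z‖ = ‖fderiv ℝ u (φ z)‖ := by
  have hφ : u ∘ φ = (fun w ↦ u (w + φ 0)) ∘ φ.linearIsometryEquiv.toContinuousLinearEquiv := by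
    ext w
    simpa using congrArg u (φ.map_vadd 0 w)
  rw [hφ, ContinuousLinearEquiv.comp_right_fderiv, fderiv_comp_add_right]
  have hz : φ.linearIsometryEquiv.toContinuousLinearEquiv z + φ 0 = φ z := by
    simpa using (φ.map_vadd 0 z).symm
  rw [hz]
  exact ContinuousLinearMap.opNorm_comp_linearIsometryEquiv _ φ.linearIsometryEquiv

lemma measurePreserving_affineIsometryEquiv {E : Type*} [NormedAddCommGroup E]
    [InnerProductSpace ℝ E] [FiniteDimensional ℝ E] [MeasurableSpace E] [BorelSpace E]
    (φ : E ≃ᵃⁱ[ℝ] E) : MeasurePreserving φ := by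
  have hφ : (φ : E → E) = (· + φ 0) ∘ φ.linearIsometryEquiv := by
    ext w
    simpa using φ.map_vadd 0 w
  rw [hφ]
  exact (measurePreserving_add_right volume (φ 0)).comp φ.linearIsometryEquiv.measurePreserving

end AffineIsometry

section Mirror

open AffineSubspace EuclideanGeometry

variable {E : Type*} [NormedAddCommGroup E] [InnerProductSpace ℝ E] [FiniteDimensional ℝ E]
  {x y z : E}

instance nonempty_perpBisector (x y : E) : Nonempty (perpBisector x y) :=
  perpBisector_nonempty.to_subtype

/-- The reflection in the perpendicular bisector of `x` and `y`. -/
noncomputable def mirror (x y : E) : E ≃ᵃⁱ[ℝ] E :=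
  reflection (perpBisector x y)

lemma mirror_mirror : mirror x y (mirror x y z) = z :=
  reflection_reflection (perpBisector x y) z

lemma mirror_left : mirror x y x = y := by
  have hperp : x - midpoint ℝ x y ∈ (perpBisector x y).directionᗮ := by
    rw [direction_perpBisector, left_sub_midpoint]
    exact Submodule.le_orthogonal_orthogonal _ <| Submodule.smul_mem _ _ <|
      Submodule.mem_span_singleton.2 ⟨-1, by simp⟩
  have h := reflection_orthogonal_vadd (midpoint_mem_perpBisector x y) hperp
  rwa [vadd_eq_add, sub_add_cancel, neg_sub, midpoint_sub_left, vadd_eq_add,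
    ← right_sub_midpoint, sub_add_cancel] at h

lemma dist_mirror_left : dist (mirror x y z) x = dist z y := by
  rw [← (mirror x y).dist_map, mirror_mirror, mirror_left]

lemma dist_mirror_right : dist (mirror x y z) y = dist z x := by
  rw [← (mirror x y).dist_map z x, mirror_left]

lemma mirror_eq_self (h : dist z x = dist z y) : mirror x y z = z :=
  (reflection_eq_self_iff z).2 (mem_perpBisector_iff_dist_eq.2 h)

end Mirror

section Polarization

variable {E : Type*} [NormedAddCommGroup E] [InnerProductSpace ℝ E] [FiniteDimensional ℝ E]
  {x y z : E} {Ω : Set E} {f g : E → ℝ} {ε : ℝ}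

/-- The polarization of the set `Ω` with respect to the half-space of points closer to `x` than
to `y`. -/
def polarizedSet (x y : E) (Ω : Set E) : Set E :=
  (Ω ∪ mirror x y ⁻¹' Ω) ∩ {z | dist z x < dist z y} ∪ Ω ∩ mirror x y ⁻¹' Ω

open Classical in
/-- The polarization (two-point rearrangement) of the function `f` with respect to the half-space
of points closer to `x` than to `y`: among `f z` and `f (mirror x y z)` the larger value is put on
the side of `x`. -/
noncomputable def polarization (x y : E) (f : E → ℝ) (z : E) : ℝ :=
  if dist z x < dist z y then max (f z) (f (mirror x y z)) else min (f z) (f (mirror x y z))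

open Classical in
/-- The smooth version of `polarization x y f` built from `softMax ε` and `softMin ε`. These agree
near the common boundary of the two half-spaces, where `f` is close to `f ∘ mirror x y`, so that
smoothness is preserved. -/
noncomputable def softPolarization (ε : ℝ) (x y : E) (f : E → ℝ) (z : E) : ℝ :=
  if dist z x < dist z y then softMax ε (f z) (f (mirror x y z))
  else softMin ε (f z) (f (mirror x y z))

lemma isOpen_polarizedSet (hΩ : IsOpen Ω) : IsOpen (polarizedSet x y Ω) := by
  have hΩ' : IsOpen (mirror x y ⁻¹' Ω) := hΩ.preimage (mirror x y).continuous
  exact ((hΩ.union hΩ').inter (isOpen_lt (by fun_prop) (by fun_prop))).union (hΩ.inter hΩ')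

lemma polarizedSet_nonempty (hΩ : Ω.Nonempty) : (polarizedSet x y Ω).Nonempty := by
  obtain ⟨z, hz⟩ := hΩ
  rcases lt_trichotomy (dist z x) (dist z y) with h | h | h
  · exact ⟨z, .inl ⟨.inl hz, h⟩⟩
  · exact ⟨z, .inr ⟨hz, by rwa [mem_preimage, mirror_eq_self h]⟩⟩
  · refine ⟨mirror x y z, .inl ⟨.inr ?_, ?_⟩⟩
    · rwa [mem_preimage, mirror_mirror]
    · rwa [mem_ofPred_eq, dist_mirror_left, dist_mirror_right]

lemma polarizedSet_ball_diff_closedBall_subset {r R : ℝ} :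
    polarizedSet x y (ball x R \ closedBall x r) ⊆ ball x R \ closedBall y r := by
  intro z hz
  simp only [polarizedSet, mem_union, mem_inter_iff, mem_preimage, Set.mem_sdiff, mem_ball,
    mem_closedBall, not_le, mem_ofPred_eq, dist_mirror_left] at hz ⊢
  rcases hz with ⟨⟨hR, hr⟩ | ⟨hR, hr⟩, h⟩ | ⟨⟨hR, -⟩, -, hr⟩
  · exact ⟨hR, hr.trans h⟩
  · exact ⟨h.trans hR, hr⟩
  · exact ⟨hR, hr⟩

lemma mem_polarizedSet_of_polarization_pos (hf : ∀ z ∉ Ω, f z = 0)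
    (hz : 0 < polarization x y f z) : z ∈ polarizedSet x y Ω := by
  have hmem {w : E} (hw : 0 < f w) : w ∈ Ω := by_contra fun h ↦ hw.ne' (hf w h)
  unfold polarization at hz
  split_ifs at hz with h
  · exact .inl ⟨(lt_max_iff.1 hz).imp hmem hmem, h⟩
  · exact .inr ⟨hmem (lt_min_iff.1 hz).1, hmem (lt_min_iff.1 hz).2⟩

lemma polarization_nonneg (hf : ∀ z, 0 ≤ f z) : 0 ≤ polarization x y f z := by
  unfold polarization
  split_ifs
  · exact le_max_of_le_left (hf z)
  · exact le_min (hf z) (hf _)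

lemma polarization_comp {h : ℝ → ℝ} {s : Set ℝ} (hh : MonotoneOn h s) (hf : ∀ z, f z ∈ s) :
    polarization x y (h ∘ f) z = h (polarization x y f z) := by
  unfold polarization
  split_ifs
  · exact (hh.map_max (hf _) (hf _)).symm
  · exact (hh.map_min (hf _) (hf _)).symm

lemma polarization_add_polarization_mirror :
    polarization x y f z + polarization x y f (mirror x y z) = f z + f (mirror x y z) := by
  simp only [polarization, mirror_mirror, dist_mirror_left, dist_mirror_right]
  rcases lt_trichotomy (dist z x) (dist z y) with h | h | h
  · rw [if_pos h, if_neg h.not_gt, min_comm, max_add_min]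
  · simp only [mirror_eq_self h, h, lt_irrefl, if_false, min_self]
  · rw [if_neg h.not_gt, if_pos h, max_comm, min_add_max]

lemma abs_polarization_sub_polarization_le {δ : ℝ} (h : ∀ z, |f z - g z| ≤ δ) :
    |polarization x y f z - polarization x y g z| ≤ δ := by
  unfold polarization
  split_ifs
  · exact (abs_max_sub_max_le_max _ _ _ _).trans (max_le (h _) (h _))
  · exact (abs_min_sub_min_le_max _ _ _ _).trans (max_le (h _) (h _))

lemma abs_softPolarization_sub_polarization_le (hε : 0 < ε) :
    |softPolarization ε x y f z - polarization x y f z| ≤ ε := by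
  unfold softPolarization polarization
  split_ifs
  · exact abs_softMax_sub_max_le hε
  · exact abs_softMin_sub_min_le hε

lemma abs_softPolarization_le : |softPolarization ε x y f z| ≤ |f z| + |f (mirror x y z)| := by
  unfold softPolarization
  split_ifs
  · exact abs_softMax_le
  · exact abs_softMin_le

lemma softPolarization_eventuallyEq (hε : 0 < ε) (hf : Continuous f) (z : E) :
    let M := fun w ↦ softMax ε (f w) (f (mirror x y w))
    let m := fun w ↦ softMin ε (f w) (f (mirror x y w))
    let P := softPolarization ε x y f
    (P =ᶠ[𝓝 z] M ∧ P ∘ mirror x y =ᶠ[𝓝 z] m) ∨ (P =ᶠ[𝓝 z] m ∧ P ∘ mirror x y =ᶠ[𝓝 z] M) := by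
  intro M m P
  have hP (w : E) : P (mirror x y w) = if dist w y < dist w x then M w else m w := by
    simp only [P, M, m, softPolarization, mirror_mirror, dist_mirror_left, dist_mirror_right,
      softMax_comm (b := f w), softMin_comm (b := f w)]
  rcases lt_trichotomy (dist z x) (dist z y) with h | h | h
  · have hnear : ∀ᶠ w in 𝓝 z, dist w x < dist w y :=
      (isOpen_lt (by fun_prop) (by fun_prop)).mem_nhds h
    exact .inl ⟨hnear.mono fun w hw ↦ if_pos hw,
      hnear.mono fun w hw ↦ (hP w).trans (if_neg hw.not_gt)⟩
  · have hfz : |f z - f (mirror x y z)| < ε := by rwa [mirror_eq_self h, sub_self, abs_zero]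
    have hcont : Continuous fun w ↦ |f w - f (mirror x y w)| :=
      (hf.sub (hf.comp (mirror x y).continuous)).abs
    have hnear : ∀ᶠ w in 𝓝 z, |f w - f (mirror x y w)| < ε :=
      hcont.continuousAt.eventually_lt_const hfz
    have hMm : ∀ᶠ w in 𝓝 z, M w = m w := hnear.mono fun w hw ↦ softMax_eq_softMin hε hw.le
    refine .inl ⟨hMm.mono fun w hw ↦ ?_, hMm.mono fun w hw ↦ ?_⟩
    · exact ite_eq_left_iff.2 fun _ ↦ hw.symm
    · rw [Function.comp_apply, hP, hw, ite_self]
  · have hnear : ∀ᶠ w in 𝓝 z, dist w y < dist w x :=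
      (isOpen_lt (by fun_prop) (by fun_prop)).mem_nhds h
    exact .inr ⟨hnear.mono fun w hw ↦ if_neg hw.not_gt,
      hnear.mono fun w hw ↦ (hP w).trans (if_pos hw)⟩

lemma contDiff_softPolarization (hε : 0 < ε) (hf : ContDiff ℝ ∞ f) :
    ContDiff ℝ ∞ (softPolarization ε x y f) := by
  have hfσ := hf.comp (contDiff_affineIsometryEquiv (mirror x y))
  refine contDiff_iff_contDiffAt.2 fun z ↦ ?_
  rcases softPolarization_eventuallyEq (x := x) (y := y) hε hf.continuous z with ⟨h, -⟩ | ⟨h, -⟩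
  · exact (contDiff_softMax hf hfσ).contDiffAt.congr_of_eventuallyEq h
  · exact (contDiff_softMin hf hfσ).contDiffAt.congr_of_eventuallyEq h

lemma norm_fderiv_softPolarization_rpow_add_le {p : ℝ} (hp : 1 ≤ p) (hε : 0 < ε)
    (hf : Differentiable ℝ f) (z : E) :
    ‖fderiv ℝ (softPolarization ε x y f) z‖ ^ p +
        ‖fderiv ℝ (softPolarization ε x y f) (mirror x y z)‖ ^ p ≤
      ‖fderiv ℝ f z‖ ^ p + ‖fderiv ℝ f (mirror x y z)‖ ^ p := by
  have hfσ : Differentiable ℝ (f ∘ mirror x y) :=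
    hf.comp ((contDiff_affineIsometryEquiv (mirror x y)).differentiable (by simp))
  have hle := norm_fderiv_softMax_rpow_add_norm_fderiv_softMin_rpow_le (ε := ε) hp (hf z) (hfσ z)
  rw [← norm_fderiv_comp_affineIsometryEquiv, ← norm_fderiv_comp_affineIsometryEquiv]
  rcases softPolarization_eventuallyEq (x := x) (y := y) hε hf.continuous z with ⟨h, hσ⟩ | ⟨h, hσ⟩
  · rw [h.fderiv_eq, hσ.fderiv_eq]
    exact hle
  · rw [h.fderiv_eq, hσ.fderiv_eq, add_comm]
    exact hle

lemma hasCompactSupport_of_abs_le_add_mirror (hf : HasCompactSupport f)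
    (h : ∀ z, |g z| ≤ |f z| + |f (mirror x y z)|) : HasCompactSupport g := by
  have hfσ : HasCompactSupport (f ∘ mirror x y) := hf.comp_homeomorph (mirror x y).toHomeomorph
  refine (hf.abs.add hfσ.abs).mono fun z hz hsum ↦ hz ?_
  have hgz : |g z| ≤ 0 := (h z).trans hsum.le
  exact abs_nonpos_iff.1 hgz

end Polarization

section Integral

lemma integral_le_integral_of_add_comp_le {α : Type*} [MeasurableSpace α] {μ : Measure α}
    {T : α ≃ᵐ α} {f g : α → ℝ} (hT : MeasurePreserving T μ μ) (hf : Integrable f μ)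
    (hg : Integrable g μ) (h : ∀ z, f z + f (T z) ≤ g z + g (T z)) :
    ∫ z, f z ∂μ ≤ ∫ z, g z ∂μ := by
  have hfT : Integrable (fun z ↦ f (T z)) μ := hT.integrable_comp_of_integrable hf
  have hgT : Integrable (fun z ↦ g (T z)) μ := hT.integrable_comp_of_integrable hg
  have hle : ∫ z, f z + f (T z) ∂μ ≤ ∫ z, g z + g (T z) ∂μ :=
    integral_mono (hf.add hfT) (hg.add hgT) h
  rw [integral_add hf hfT, integral_add hg hgT, hT.integral_comp', hT.integral_comp'] at hle
  linarith

lemma integrable_norm_rpow {X F : Type*} [TopologicalSpace X] [MeasurableSpace X]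
    [OpensMeasurableSpace X] {μ : Measure X} [IsFiniteMeasureOnCompacts μ] [NormedAddCommGroup F]
    {f : X → F} {p : ℝ} (hp : 0 < p) (hf : Continuous f) (hfc : HasCompactSupport f) :
    Integrable (fun z ↦ ‖f z‖ ^ p) μ :=
  (hf.norm.rpow_const fun _ ↦ .inr hp.le).integrable_of_hasCompactSupport
    (hfc.norm.rpow_const hp.ne')

variable {E : Type*} [NormedAddCommGroup E] [InnerProductSpace ℝ E] [FiniteDimensional ℝ E]
  [MeasurableSpace E] [BorelSpace E] {x y : E} {f u : E → ℝ} {p ε : ℝ}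

/-- The `p`-Dirichlet energy `∫ ‖Du‖ᵖ`. -/
noncomputable def dirichletEnergy (p : ℝ) (u : E → ℝ) : ℝ := ∫ z, ‖fderiv ℝ u z‖ ^ p

lemma dirichletEnergy_nonneg : 0 ≤ dirichletEnergy p u :=
  integral_nonneg fun _ ↦ by positivity

lemma integrable_norm_fderiv_rpow (hp : 0 < p) (hu : ContDiff ℝ ∞ u) (huc : HasCompactSupport u) :
    Integrable fun z ↦ ‖fderiv ℝ u z‖ ^ p :=
  integrable_norm_rpow hp (hu.continuous_fderiv (by simp)) (huc.fderiv ℝ)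

lemma dirichletEnergy_comp_affineIsometryEquiv (φ : E ≃ᵃⁱ[ℝ] E) :
    dirichletEnergy p (u ∘ φ) = dirichletEnergy p u := by
  simp only [dirichletEnergy, norm_fderiv_comp_affineIsometryEquiv]
  exact (measurePreserving_affineIsometryEquiv φ).integral_comp
    φ.toHomeomorph.measurableEmbedding fun z ↦ ‖fderiv ℝ u z‖ ^ p

lemma dirichletEnergy_softAbs_comp_le (hp : 0 < p) (hu : ContDiff ℝ ∞ u)
    (huc : HasCompactSupport u) (hε : 0 < ε) :
    dirichletEnergy p (softAbs ε ∘ u) ≤ dirichletEnergy p u := by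
  have hsupp : HasCompactSupport (softAbs ε ∘ u) :=
    huc.comp_left (softAbs_of_abs_le hε (by simpa using hε.le))
  refine integral_mono (integrable_norm_fderiv_rpow hp (contDiff_softAbs.comp hu) hsupp)
    (integrable_norm_fderiv_rpow hp hu huc) fun z ↦ ?_
  exact Real.rpow_le_rpow (norm_nonneg _)
    (norm_fderiv_softAbs_comp_le (hu.differentiable (by simp) z)) hp.le

lemma measurePreserving_mirror :
    MeasurePreserving (mirror x y).toHomeomorph.toMeasurableEquiv volume volume :=
  measurePreserving_affineIsometryEquiv (mirror x y)

lemma dirichletEnergy_softPolarization_le (hp : 1 ≤ p) (hu : ContDiff ℝ ∞ u)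
    (huc : HasCompactSupport u) (hε : 0 < ε) :
    dirichletEnergy p (softPolarization ε x y u) ≤ dirichletEnergy p u :=
  integral_le_integral_of_add_comp_le measurePreserving_mirror
    (integrable_norm_fderiv_rpow (by linarith) (contDiff_softPolarization hε hu)
      (hasCompactSupport_of_abs_le_add_mirror huc fun _ ↦ abs_softPolarization_le))
    (integrable_norm_fderiv_rpow (by linarith) hu huc)
    (norm_fderiv_softPolarization_rpow_add_le hp hε (hu.differentiable (by simp)))

lemma integrable_polarization (hf : Integrable f) : Integrable (polarization x y f) := by
  classical
  have hfσ : Integrable (f ∘ mirror x y) :=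
    (measurePreserving_affineIsometryEquiv (mirror x y)).integrable_comp_of_integrable hf
  have hhalf : MeasurableSet {z : E | dist z x < dist z y} :=
    (isOpen_lt (by fun_prop) (by fun_prop)).measurableSet
  exact Integrable.piecewise hhalf (hf.sup hfσ).integrableOn (hf.inf hfσ).integrableOn

lemma integral_polarization (hf : Integrable f) : ∫ z, polarization x y f z = ∫ z, f z :=
  le_antisymm
    (integral_le_integral_of_add_comp_le measurePreserving_mirror (integrable_polarization hf) hf
      fun _ ↦ polarization_add_polarization_mirror.le)
    (integral_le_integral_of_add_comp_le measurePreserving_mirror hf (integrable_polarization hf)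
      fun _ ↦ polarization_add_polarization_mirror.ge)

lemma integral_polarization_abs_rpow (hp : 0 < p) (hu : Continuous u) (huc : HasCompactSupport u) :
    ∫ z, polarization x y (fun w ↦ |u w|) z ^ p = ∫ z, |u z| ^ p := by
  have hcomp (z : E) : polarization x y (fun w ↦ |u w|) z ^ p =
      polarization x y (fun w ↦ |u w| ^ p) z :=
    (polarization_comp (Real.monotoneOn_rpow_Ici_of_exponent_nonneg hp.le)
      fun w ↦ abs_nonneg (u w)).symm
  simp only [hcomp]
  exact integral_polarization (integrable_norm_rpow hp hu huc)

end Integral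

section TestFunction

variable {E : Type*} [NormedAddCommGroup E] [NormedSpace ℝ E] {Ω Ω' : Set E} {u : E → ℝ}

/-- The admissible functions in the variational definition of the first Dirichlet eigenvalue of
`Ω`, with the zero function included. -/
structure IsTestFunction (Ω : Set E) (u : E → ℝ) : Prop where
  contDiff : ContDiff ℝ ∞ u
  hasCompactSupport : HasCompactSupport u
  tsupport_subset : tsupport u ⊆ Ω

lemma IsTestFunction.mono (hu : IsTestFunction Ω u) (hΩ : Ω ⊆ Ω') : IsTestFunction Ω' u :=
  ⟨hu.contDiff, hu.hasCompactSupport, hu.tsupport_subset.trans hΩ⟩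

lemma IsTestFunction.eq_zero_of_notMem (hu : IsTestFunction Ω u) {z : E} (hz : z ∉ Ω) : u z = 0 :=
  image_eq_zero_of_notMem_tsupport fun h ↦ hz (hu.tsupport_subset h)

lemma IsTestFunction.comp_affineIsometryEquiv (hu : IsTestFunction Ω u) (φ : E ≃ᵃⁱ[ℝ] E) :
    IsTestFunction (φ ⁻¹' Ω) (u ∘ φ) where
  contDiff := hu.contDiff.comp (contDiff_affineIsometryEquiv φ)
  hasCompactSupport := hu.hasCompactSupport.comp_homeomorph φ.toHomeomorph
  tsupport_subset :=
    (tsupport_comp_subset_preimage u φ.continuous).trans (preimage_mono hu.tsupport_subset)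

lemma IsTestFunction.integral_abs_rpow_pos [MeasurableSpace E] [OpensMeasurableSpace E]
    {μ : Measure E} [IsFiniteMeasureOnCompacts μ] [μ.IsOpenPosMeasure] {p : ℝ}
    (hu : IsTestFunction Ω u) (hu₀ : u ≠ 0) (hp : 0 < p) : 0 < ∫ z, |u z| ^ p ∂μ := by
  obtain ⟨z, hz⟩ := Function.ne_iff.1 hu₀
  exact Continuous.integral_pos_of_hasCompactSupport_nonneg_nonzero
    (hu.contDiff.continuous.abs.rpow_const fun _ ↦ .inr hp.le)
    (hu.hasCompactSupport.abs.rpow_const hp.ne') (fun _ ↦ by positivity)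
    (Real.rpow_pos_of_pos (abs_pos.2 hz) p).ne'

end TestFunction

section TruncatedPolarization

variable {E : Type*} [NormedAddCommGroup E] [InnerProductSpace ℝ E] [FiniteDimensional ℝ E]
  {x y z : E} {Ω : Set E} {u : E → ℝ} {p ε : ℝ}

/-- A smooth approximation of the polarization of `|u|`. The outer `softAbs` cuts off the part of
the soft polarization that spills out of the polarized support of `u`. -/
noncomputable def truncatedPolarization (ε : ℝ) (x y : E) (u : E → ℝ) : E → ℝ :=
  softAbs (2 * ε) ∘ softPolarization ε x y (softAbs ε ∘ u)

lemma abs_truncatedPolarization_le :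
    |truncatedPolarization ε x y u z| ≤ |u z| + |u (mirror x y z)| :=
  calc |truncatedPolarization ε x y u z|
      ≤ |softPolarization ε x y (softAbs ε ∘ u) z| := abs_softAbs_le_abs
    _ ≤ |softAbs ε (u z)| + |softAbs ε (u (mirror x y z))| := abs_softPolarization_le
    _ ≤ |u z| + |u (mirror x y z)| := add_le_add abs_softAbs_le_abs abs_softAbs_le_abs

lemma abs_truncatedPolarization_sub_polarization_le (hε : 0 < ε) :
    |truncatedPolarization ε x y u z - polarization x y (fun w ↦ |u w|) z| ≤ 7 * ε := by
  set U := softAbs ε ∘ u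
  set W := softPolarization ε x y U z
  have hPU : |polarization x y U z| = polarization x y U z :=
    abs_of_nonneg (polarization_nonneg fun _ ↦ softAbs_nonneg hε)
  have h₁ : |softAbs (2 * ε) W - (|W|)| ≤ 4 * ε :=
    (abs_softAbs_sub_abs_le (by positivity)).trans_eq (by ring)
  have h₂ : |(|W|) - polarization x y U z| ≤ ε := by
    rw [← hPU]
    exact (abs_abs_sub_abs_le _ _).trans (abs_softPolarization_sub_polarization_le hε)
  have h₃ : |polarization x y U z - polarization x y (fun w ↦ |u w|) z| ≤ 2 * ε :=
    abs_polarization_sub_polarization_le fun _ ↦ abs_softAbs_sub_abs_le hε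
  calc |softAbs (2 * ε) W - polarization x y (fun w ↦ |u w|) z|
      ≤ |softAbs (2 * ε) W - (|W|)| + |(|W|) - polarization x y U z| +
          |polarization x y U z - polarization x y (fun w ↦ |u w|) z| :=
        (abs_sub_le _ (polarization x y U z) _).trans (by gcongr; exact abs_sub_le _ _ _)
    _ ≤ 7 * ε := by linarith

lemma tendsto_truncatedPolarization :
    Tendsto (fun ε ↦ truncatedPolarization ε x y u z) (𝓝[>] 0)
      (𝓝 (polarization x y (fun w ↦ |u w|) z)) := by
  have hε : Tendsto (fun ε : ℝ ↦ 7 * ε) (𝓝[>] 0) (𝓝 0) :=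
    (Continuous.tendsto' (by fun_prop) 0 0 (mul_zero 7)).mono_left nhdsWithin_le_nhds
  refine tendsto_iff_dist_tendsto_zero.2 (squeeze_zero' (.of_forall fun _ ↦ dist_nonneg) ?_ hε)
  filter_upwards [self_mem_nhdsWithin] with ε hε
  exact abs_truncatedPolarization_sub_polarization_le hε

lemma tsupport_truncatedPolarization_subset (hε : 0 < ε) (hu : ContDiff ℝ ∞ u)
    (huΩ : ∀ z ∉ Ω, u z = 0) :
    tsupport (truncatedPolarization ε x y u) ⊆ polarizedSet x y Ω := by
  set U := softAbs ε ∘ u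
  set W := softPolarization ε x y U
  have hW : Continuous W := (contDiff_softPolarization hε (contDiff_softAbs.comp hu)).continuous
  have hclosed : IsClosed {z | 2 * ε ≤ |W z|} := isClosed_le continuous_const hW.abs
  have hsupp : Function.support (truncatedPolarization ε x y u) ⊆ {z | 2 * ε ≤ |W z|} :=
    fun z hz ↦ le_of_not_ge fun h ↦ hz (softAbs_of_abs_le (by positivity) h)
  refine (closure_minimal hsupp hclosed).trans fun z (hz : 2 * ε ≤ |W z|) ↦ ?_
  have hUΩ : ∀ w ∉ Ω, U w = 0 := fun w hw ↦
    softAbs_of_abs_le hε (by rw [huΩ w hw, abs_zero]; exact hε.le)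
  have hPU : 0 ≤ polarization x y U z := polarization_nonneg fun _ ↦ softAbs_nonneg hε
  have hdist : |W z| - |polarization x y U z| ≤ ε :=
    (abs_sub_abs_le_abs_sub _ _).trans (abs_softPolarization_sub_polarization_le hε)
  rw [abs_of_nonneg hPU] at hdist
  exact mem_polarizedSet_of_polarization_pos hUΩ (by linarith)

lemma isTestFunction_truncatedPolarization (hu : IsTestFunction Ω u) (hε : 0 < ε) :
    IsTestFunction (polarizedSet x y Ω) (truncatedPolarization ε x y u) where
  contDiff :=
    contDiff_softAbs.comp (contDiff_softPolarization hε (contDiff_softAbs.comp hu.contDiff))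
  hasCompactSupport :=
    hasCompactSupport_of_abs_le_add_mirror hu.hasCompactSupport fun _ ↦
      abs_truncatedPolarization_le
  tsupport_subset :=
    tsupport_truncatedPolarization_subset hε hu.contDiff fun _ hz ↦ hu.eq_zero_of_notMem hz

variable [MeasurableSpace E] [BorelSpace E]

lemma dirichletEnergy_truncatedPolarization_le (hu : IsTestFunction Ω u)
    (hp : 1 ≤ p) (hε : 0 < ε) :
    dirichletEnergy p (truncatedPolarization ε x y u) ≤ dirichletEnergy p u := by
  have hU : ContDiff ℝ ∞ (softAbs ε ∘ u) := contDiff_softAbs.comp hu.contDiff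
  have hUc : HasCompactSupport (softAbs ε ∘ u) :=
    hu.hasCompactSupport.comp_left (softAbs_of_abs_le hε (by simpa using hε.le))
  have hWc : HasCompactSupport (softPolarization ε x y (softAbs ε ∘ u)) :=
    hasCompactSupport_of_abs_le_add_mirror hUc fun _ ↦ abs_softPolarization_le
  calc dirichletEnergy p (truncatedPolarization ε x y u)
      ≤ dirichletEnergy p (softPolarization ε x y (softAbs ε ∘ u)) :=
        dirichletEnergy_softAbs_comp_le (by linarith) (contDiff_softPolarization hε hU) hWc
          (by positivity)
    _ ≤ dirichletEnergy p (softAbs ε ∘ u) := dirichletEnergy_softPolarization_le hp hU hUc hε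
    _ ≤ dirichletEnergy p u :=
        dirichletEnergy_softAbs_comp_le (by linarith) hu.contDiff hu.hasCompactSupport hε

lemma tendsto_integral_abs_truncatedPolarization_rpow (hu : IsTestFunction Ω u)
    (hp : 0 < p) :
    Tendsto (fun ε ↦ ∫ z, |truncatedPolarization ε x y u z| ^ p) (𝓝[>] 0)
      (𝓝 (∫ z, |u z| ^ p)) := by
  have hcont := hu.contDiff.continuous
  have huσ : HasCompactSupport (u ∘ mirror x y) :=
    hu.hasCompactSupport.comp_homeomorph (mirror x y).toHomeomorph
  have hbound : Integrable fun z ↦ ‖|u z| + |u (mirror x y z)|‖ ^ p :=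
    integrable_norm_rpow hp (hcont.abs.add (hcont.comp (mirror x y).continuous).abs)
      (hu.hasCompactSupport.abs.add huσ.abs)
  rw [← integral_polarization_abs_rpow (x := x) (y := y) hp hcont hu.hasCompactSupport]
  refine tendsto_integral_filter_of_dominated_convergence _ ?_ ?_ hbound ?_
  · filter_upwards [self_mem_nhdsWithin] with ε hε
    exact (integrable_norm_rpow hp (isTestFunction_truncatedPolarization hu hε).contDiff.continuous
      (isTestFunction_truncatedPolarization hu hε).hasCompactSupport).aestronglyMeasurable
  · refine .of_forall fun ε ↦ .of_forall fun z ↦ ?_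
    rw [Real.norm_of_nonneg (by positivity), Real.norm_of_nonneg (by positivity)]
    gcongr
    exact abs_truncatedPolarization_le
  · refine .of_forall fun z ↦ ?_
    have hpos : 0 ≤ polarization x y (fun w ↦ |u w|) z := polarization_nonneg fun _ ↦ abs_nonneg _
    rw [← abs_of_nonneg hpos]
    exact tendsto_truncatedPolarization.abs.rpow_const (.inr hp.le)

end TruncatedPolarization

section FirstEigenvalue

variable {N : ℕ} {p c : ℝ} {Ω Ω' : Set (EuclideanSpace ℝ (Fin N))}
  {u : EuclideanSpace ℝ (Fin N) → ℝ}

lemma setIntegral_norm_gradient_rpow_div_eq (hu : IsTestFunction Ω u) (hp : p ≠ 0) :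
    (∫ z in Ω, ‖gradient u z‖ ^ p) / (∫ z in Ω, |u z| ^ p) =
      dirichletEnergy p u / ∫ z, |u z| ^ p := by
  have hgrad (z) : ‖gradient u z‖ = ‖fderiv ℝ u z‖ := by simp [gradient]
  have hfderiv (z) (hz : z ∉ Ω) : ‖fderiv ℝ u z‖ ^ p = 0 := by
    rw [fderiv_of_notMem_tsupport ℝ fun h ↦ hz (hu.tsupport_subset h), norm_zero,
      Real.zero_rpow hp]
  have hval (z) (hz : z ∉ Ω) : |u z| ^ p = 0 := by
    rw [hu.eq_zero_of_notMem hz, abs_zero, Real.zero_rpow hp]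
  simp only [hgrad, dirichletEnergy, setIntegral_eq_integral_of_forall_compl_eq_zero hfderiv,
    setIntegral_eq_integral_of_forall_compl_eq_zero hval]

lemma lam1_eq_sInf (hp : p ≠ 0) :
    lam1 p Ω = sInf {r | ∃ u, IsTestFunction Ω u ∧ u ≠ 0 ∧
      r = dirichletEnergy p u / ∫ z, |u z| ^ p} := by
  refine congrArg sInf (Set.ext fun r ↦ ⟨?_, ?_⟩)
  · rintro ⟨u, hu, hu₀, huc, huΩ, rfl⟩
    exact ⟨u, ⟨hu, huc, huΩ⟩, hu₀, setIntegral_norm_gradient_rpow_div_eq ⟨hu, huc, huΩ⟩ hp⟩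
  · rintro ⟨u, hu, hu₀, rfl⟩
    exact ⟨u, hu.contDiff, hu₀, hu.hasCompactSupport, hu.tsupport_subset,
      (setIntegral_norm_gradient_rpow_div_eq hu hp).symm⟩

lemma lam1_mul_integral_le_dirichletEnergy (hu : IsTestFunction Ω u) (hp : 0 < p) :
    lam1 p Ω * ∫ z, |u z| ^ p ≤ dirichletEnergy p u := by
  rcases eq_or_ne u 0 with rfl | hu₀
  · simpa [Real.zero_rpow hp.ne'] using dirichletEnergy_nonneg
  rw [← le_div_iff₀ (hu.integral_abs_rpow_pos hu₀ hp), lam1_eq_sInf hp.ne']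
  refine csInf_le ⟨0, ?_⟩ ⟨u, hu, hu₀, rfl⟩
  rintro _ ⟨v, hv, hv₀, rfl⟩
  exact div_nonneg dirichletEnergy_nonneg (hv.integral_abs_rpow_pos hv₀ hp).le

lemma le_lam1 (hΩ : IsOpen Ω) (hΩ₀ : Ω.Nonempty) (hp : 0 < p)
    (h : ∀ u, IsTestFunction Ω u → c * ∫ z, |u z| ^ p ≤ dirichletEnergy p u) : c ≤ lam1 p Ω := by
  obtain ⟨z, hz⟩ := hΩ₀
  obtain ⟨u, huΩ, huc, hu, -, huz⟩ := exists_contDiff_tsupport_subset (n := ⊤) (hΩ.mem_nhds hz)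
  have hu₀ : u ≠ 0 := fun h ↦ one_ne_zero (huz.symm.trans (congrFun h z))
  rw [lam1_eq_sInf hp.ne']
  refine le_csInf ⟨_, u, ⟨hu, huc, huΩ⟩, hu₀, rfl⟩ ?_
  rintro _ ⟨v, hv, hv₀, rfl⟩
  exact (le_div_iff₀ (hv.integral_abs_rpow_pos hv₀ hp)).2 (h v hv)

lemma lam1_anti (hΩ : IsOpen Ω) (hΩ₀ : Ω.Nonempty) (hp : 0 < p) (h : Ω ⊆ Ω') :
    lam1 p Ω' ≤ lam1 p Ω :=
  le_lam1 hΩ hΩ₀ hp fun _ hu ↦ lam1_mul_integral_le_dirichletEnergy (hu.mono h) hp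

lemma lam1_preimage (φ : EuclideanSpace ℝ (Fin N) ≃ᵃⁱ[ℝ] EuclideanSpace ℝ (Fin N))
    (hΩ : IsOpen Ω) (hΩ₀ : Ω.Nonempty) (hp : 0 < p) : lam1 p (φ ⁻¹' Ω) = lam1 p Ω := by
  have key (ψ : EuclideanSpace ℝ (Fin N) ≃ᵃⁱ[ℝ] EuclideanSpace ℝ (Fin N))
      {Ω : Set (EuclideanSpace ℝ (Fin N))} (hΩ : IsOpen Ω) (hΩ₀ : Ω.Nonempty) :
      lam1 p (ψ ⁻¹' Ω) ≤ lam1 p Ω := by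
    refine le_lam1 hΩ hΩ₀ hp fun u hu ↦ ?_
    have hint : ∫ z, |u (ψ z)| ^ p = ∫ z, |u z| ^ p :=
      (measurePreserving_affineIsometryEquiv ψ).integral_comp
        ψ.toHomeomorph.measurableEmbedding fun z ↦ |u z| ^ p
    rw [← hint, ← dirichletEnergy_comp_affineIsometryEquiv ψ]
    exact lam1_mul_integral_le_dirichletEnergy (hu.comp_affineIsometryEquiv ψ) hp
  refine le_antisymm (key φ hΩ hΩ₀) ?_
  have hsymm : φ.symm ⁻¹' (φ ⁻¹' Ω) = Ω := by
    ext z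
    simp
  have h := key φ.symm (hΩ.preimage φ.continuous) (hΩ₀.preimage φ.surjective)
  rwa [hsymm] at h

theorem lam1_polarizedSet_le {x y : EuclideanSpace ℝ (Fin N)} (hΩ : IsOpen Ω) (hΩ₀ : Ω.Nonempty)
    (hp : 1 ≤ p) : lam1 p (polarizedSet x y Ω) ≤ lam1 p Ω := by
  have hp₀ : 0 < p := zero_lt_one.trans_le hp
  refine le_lam1 hΩ hΩ₀ hp₀ fun u hu ↦ ?_
  have hlim := (tendsto_integral_abs_truncatedPolarization_rpow (x := x) (y := y) hu hp₀).const_mul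
    (lam1 p (polarizedSet x y Ω))
  refine le_of_tendsto hlim ?_
  filter_upwards [self_mem_nhdsWithin] with ε hε
  calc lam1 p (polarizedSet x y Ω) * ∫ z, |truncatedPolarization ε x y u z| ^ p
      ≤ dirichletEnergy p (truncatedPolarization ε x y u) :=
        lam1_mul_integral_le_dirichletEnergy (isTestFunction_truncatedPolarization hu hε) hp₀
    _ ≤ dirichletEnergy p u := dirichletEnergy_truncatedPolarization_le hu hp hε

end FirstEigenvalue

theorem stmt17_general (N : ℕ) (hN : 1 ≤ N) (R₀ R₁ : ℝ) (hR₀ : 0 < R₀) (hR : R₀ < R₁)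
    (p : ℝ) (hp : 1 ≤ p) (x y : EuclideanSpace ℝ (Fin N)) :
    lam1 p (ball x R₁ \ closure (ball y R₀)) ≤
      lam1 p (ball (0 : EuclideanSpace ℝ (Fin N)) R₁ \ closure (ball 0 R₀)) := by
  have hp₀ : 0 < p := zero_lt_one.trans_le hp
  simp only [closure_ball _ hR₀.ne']
  have hopen (w : EuclideanSpace ℝ (Fin N)) : IsOpen (ball w R₁ \ closedBall w R₀) :=
    isOpen_ball.sdiff isClosed_closedBall
  have hne (w : EuclideanSpace ℝ (Fin N)) : (ball w R₁ \ closedBall w R₀).Nonempty := by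
    obtain ⟨r, hr₀, hr₁⟩ := exists_between hR
    refine ⟨w + EuclideanSpace.single ⟨0, hN⟩ r, ?_⟩
    simp [abs_of_pos (hR₀.trans hr₀), hr₀, hr₁]
  calc lam1 p (ball x R₁ \ closedBall y R₀)
      ≤ lam1 p (polarizedSet x y (ball x R₁ \ closedBall x R₀)) :=
        lam1_anti (isOpen_polarizedSet (hopen x)) (polarizedSet_nonempty (hne x)) hp₀
          polarizedSet_ball_diff_closedBall_subset
    _ ≤ lam1 p (ball x R₁ \ closedBall x R₀) := lam1_polarizedSet_le (hopen x) (hne x) hp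
    _ = lam1 p (ball 0 R₁ \ closedBall 0 R₀) := by
        rw [← lam1_preimage (AffineIsometryEquiv.constVAdd ℝ _ x) (hopen x) (hne x) hp₀]
        congr 1
        ext z
        simp

theorem stmt17 (N : ℕ) (hN : 2 ≤ N) (R₀ R₁ : ℝ) (hR₀ : 0 < R₀) (hR : R₀ < R₁)
    (p : ℝ) (hp : 1 < p) (x y : EuclideanSpace ℝ (Fin N)) (hxy : ‖x - y‖ ≤ R₁ - R₀) :
    lam1 p (ball x R₁ \ closure (ball y R₀)) ≤
      lam1 p (ball (0 : EuclideanSpace ℝ (Fin N)) R₁ \ closure (ball 0 R₀)) :=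
  stmt17_general N (by lia) R₀ R₁ hR₀ hR p hp.le x y
end

section
/- Let N ≥ 2 and 0 < R₀ < R₁. Then there exist s ∈ (0, R₁ − R₀) and a nonempty open set D ⊆ Ω_s such that μH^{N−1}(∂D) · vol(Ω_s) < μH^{N−1}(∂Ω_s) · vol(D), where ∂ denotes the topological boundary; that is, the relative perimeter-to-volume ratio of D is strictly smaller than that of the eccentric annulus Ω_s itself (so Ω_s is not a Cheeger set of itself). -/
open MeasureTheory Metric Set Filter
open scoped RealInnerProductSpace ENNReal Topology

/-!
Let the hole almost touch the outer sphere, at distance `δ`, and let `D` be the part of the annulus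
below a hyperplane orthogonal to `e` that cuts the hole at depth `δ`. Every point of the outer ball
on that hyperplane is the orthogonal projection of a point of the outer sphere beyond it, so the
cut lowers the perimeter by at least the measure of the slice of the hole, which is of order
`δ ^ ((N - 1) / 2)`. The volume lost lies in a cap of the outer ball of height `2 * δ`, hence is
only `O(δ ^ (N / 2))`; for small `δ` the first effect wins.
-/

theorem eventually_mul_ofReal_pow_succ_lt {C c : ℝ≥0∞} (hC : C ≠ ∞) (hc : c ≠ 0) (n : ℕ) :
    ∀ᶠ r in 𝓝[>] (0 : ℝ), C * ENNReal.ofReal r ^ (n + 1) < c * ENNReal.ofReal r ^ n := by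
  have hlim : Tendsto (fun r => C * ENNReal.ofReal r) (𝓝[>] 0) (𝓝 0) := by
    simpa using ENNReal.Tendsto.const_mul
      ((ENNReal.continuous_ofReal.tendsto' 0 0 ENNReal.ofReal_zero).mono_left nhdsWithin_le_nhds)
      (Or.inr hC)
  filter_upwards [hlim.eventually_lt_const (pos_iff_ne_zero.2 hc), self_mem_nhdsWithin]
    with r hlt (hr : 0 < r)
  have hr0 : ENNReal.ofReal r ^ n ≠ 0 := pow_ne_zero n (ENNReal.ofReal_pos.2 hr).ne'
  have hrtop : ENNReal.ofReal r ^ n ≠ ∞ := ENNReal.pow_ne_top ENNReal.ofReal_ne_top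
  calc C * ENNReal.ofReal r ^ (n + 1) = ENNReal.ofReal r ^ n * (C * ENNReal.ofReal r) := by ring
    _ < ENNReal.ofReal r ^ n * c := ENNReal.mul_lt_mul_right hr0 hrtop hlt
    _ = c * ENNReal.ofReal r ^ n := mul_comm _ _

theorem eventually_mul_ofReal_mul_pow_succ_lt {C c : ℝ≥0∞} (hC : C ≠ ∞) (hc : c ≠ 0) {α β : ℝ}
    (hα : 0 ≤ α) (hβ : 0 < β) (n : ℕ) :
    ∀ᶠ r in 𝓝[>] (0 : ℝ),
      C * ENNReal.ofReal (α * r) ^ (n + 1) < c * ENNReal.ofReal (β * r) ^ n := by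
  have hC' : C * ENNReal.ofReal α ^ (n + 1) ≠ ∞ := by finiteness
  have hc' : c * ENNReal.ofReal β ^ n ≠ 0 :=
    mul_ne_zero hc (pow_ne_zero n (ENNReal.ofReal_pos.2 hβ).ne')
  filter_upwards [eventually_mul_ofReal_pow_succ_lt hC' hc' n] with r hr
  rwa [ENNReal.ofReal_mul hα, ENNReal.ofReal_mul hβ.le, mul_pow, mul_pow, ← mul_assoc,
    ← mul_assoc]

theorem tendsto_sqrt_sub_nhdsGT_zero (a : ℝ) :
    Tendsto (fun s => √(a - s)) (𝓝[<] a) (𝓝[>] 0) := by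
  refine tendsto_nhdsWithin_iff.2 ⟨?_, ?_⟩
  · exact (Continuous.tendsto' (by fun_prop) _ _ (by simp)).mono_left nhdsWithin_le_nhds
  · exact eventually_mem_nhdsWithin.mono fun s hs => Real.sqrt_pos.2 (sub_pos.2 hs)

section Frontier

variable {X : Type*} [TopologicalSpace X]

theorem frontier_sdiff_subset (U K : Set X) : frontier (U \ K) ⊆ frontier U ∪ frontier K := by
  rw [sdiff_eq, ← frontier_compl K]
  exact (frontier_inter_subset U Kᶜ).trans
    (union_subset_union inter_subset_left inter_subset_right)

theorem frontier_subset_frontier_sdiff {U K : Set X} (hU : IsOpen U) (hK : IsClosed K)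
    (hKU : K ⊆ U) : frontier U ⊆ frontier (U \ K) := by
  rw [hU.frontier_eq, (hU.sdiff hK).frontier_eq, sdiff_eq U K, inter_comm U]
  rintro x ⟨hxU, hx⟩
  exact ⟨hK.isOpen_compl.inter_closure ⟨fun hxK => hx (hKU hxK), hxU⟩, fun h => hx h.2⟩

theorem frontier_inter_lt_subset {A : Set X} (hA : IsOpen A) {f : X → ℝ} (hf : Continuous f)
    (t : ℝ) :
    frontier (A ∩ {x | f x < t}) ⊆ (frontier A \ {x | t < f x}) ∪ (A ∩ {x | f x = t}) := by
  intro x hx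
  obtain ⟨hxA, hxt⟩ | ⟨hxA, hxt⟩ := frontier_inter_subset _ _ hx
  · have hxt : f x ≤ t := closure_lt_subset_le hf continuous_const hxt
    exact Or.inl ⟨hxA, hxt.not_gt⟩
  · have hxt : f x = t := frontier_lt_subset_eq hf continuous_const hxt
    by_cases h : x ∈ A
    · exact Or.inr ⟨h, hxt⟩
    · exact Or.inl ⟨hA.frontier_eq ▸ ⟨hxA, h⟩, hxt.not_gt⟩

end Frontier

theorem exists_pos_add_smul_mem_frontier {E : Type*} [NormedAddCommGroup E] [NormedSpace ℝ E]
    {A : Set E} (hA : IsOpen A) (hAb : Bornology.IsBounded A) {x e : E} (hx : x ∈ A)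
    (he : e ≠ 0) : ∃ τ : ℝ, 0 < τ ∧ x + τ • e ∈ frontier A := by
  by_contra! hray
  let ray : Set E := (fun τ : ℝ => x + τ • e) '' Ici 0
  have hconn : IsPreconnected ray :=
    isPreconnected_Ici.image _ (by fun_prop)
  have hxray : x ∈ ray := ⟨0, mem_Ici.2 le_rfl, by simp⟩
  have hsub : ray ⊆ A := by
    refine hconn.subset_of_closure_inter_subset hA ⟨x, hxray, hx⟩ ?_
    rintro _ ⟨hcl, τ, hτ, rfl⟩
    obtain rfl | hτ := (mem_Ici.1 hτ).eq_or_lt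
    · simpa using hx
    · by_contra h
      exact hray τ hτ (hA.frontier_eq ▸ ⟨hcl, h⟩)
  obtain ⟨C, hC⟩ := hAb.exists_norm_le
  have hC0 : 0 ≤ C := (norm_nonneg x).trans (hC x hx)
  have hfar : ‖x + ((2 * C + 1) / ‖e‖) • e‖ ≤ C :=
    hC _ (hsub ⟨_, mem_Ici.2 (by positivity), rfl⟩)
  have hnorm : ‖((2 * C + 1) / ‖e‖) • e‖ = 2 * C + 1 := by
    rw [norm_smul, Real.norm_of_nonneg (by positivity), div_mul_cancel₀ _ (norm_ne_zero_iff.2 he)]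
  linarith [norm_le_add_norm_add' x (((2 * C + 1) / ‖e‖) • e), hC x hx]

section Cut

variable {E : Type*} [NormedAddCommGroup E] [InnerProductSpace ℝ E] [MeasurableSpace E]
  [BorelSpace E] {d : ℝ} {e : E}

-- Along the ray in direction `e`, every point of the slice is the orthogonal projection of a
-- frontier point, and projections do not increase Hausdorff measure.
theorem hausdorffMeasure_inter_hyperplane_le (hd : 0 ≤ d) (he : ‖e‖ = 1) {A : Set E}
    (hA : IsOpen A) (hAb : Bornology.IsBounded A) (t : ℝ) :
    μH[d] (A ∩ {x | ⟪e, x⟫ = t}) ≤ μH[d] (frontier A ∩ {x | t < ⟪e, x⟫}) := by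
  have he0 : e ≠ 0 := norm_ne_zero_iff.1 (by simp [he])
  let proj : E → E := fun x => t • e + (ℝ ∙ e)ᗮ.starProjection x
  have hproj : LipschitzWith 1 proj := by
    simpa [proj] using (LipschitzWith.const (t • e)).add (ℝ ∙ e)ᗮ.lipschitzWith_starProjection
  have hcover : A ∩ {x | ⟪e, x⟫ = t} ⊆ proj '' (frontier A ∩ {x | t < ⟪e, x⟫}) := by
    rintro x ⟨hxA, hxt : ⟪e, x⟫ = t⟩
    obtain ⟨τ, hτ, hfr⟩ := exists_pos_add_smul_mem_frontier hA hAb hxA he0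
    refine ⟨x + τ • e, ⟨hfr, ?_⟩, ?_⟩
    · simpa [inner_add_right, inner_smul_right, he, hxt] using hτ
    · simp only [proj, map_add, map_smul,
        Submodule.starProjection_orthogonalComplement_singleton_eq_zero, smul_zero, add_zero]
      rw [Submodule.starProjection_orthogonal_val, Submodule.starProjection_unit_singleton ℝ he,
        hxt, add_sub_cancel]
  calc μH[d] (A ∩ {x | ⟪e, x⟫ = t})
      ≤ μH[d] (proj '' (frontier A ∩ {x | t < ⟪e, x⟫})) := measure_mono hcover
    _ ≤ μH[d] (frontier A ∩ {x | t < ⟪e, x⟫}) := by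
      simpa using hproj.hausdorffMeasure_image_le hd _

theorem hausdorffMeasure_frontier_cut_add_le (hd : 0 ≤ d) (he : ‖e‖ = 1) {U K : Set E}
    (hU : IsOpen U) (hUb : Bornology.IsBounded U) (hK : IsClosed K) (hKU : K ⊆ U) (t : ℝ) :
    μH[d] (frontier ((U \ K) ∩ {x | ⟪e, x⟫ < t})) + μH[d] (K ∩ {x | ⟪e, x⟫ = t}) ≤
      μH[d] (frontier (U \ K)) := by
  set H : Set E := {x | ⟪e, x⟫ = t}
  set T : Set E := {x | t < ⟪e, x⟫}
  have hT : MeasurableSet T := (isOpen_lt continuous_const (by fun_prop)).measurableSet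
  have hfr : frontier ((U \ K) ∩ {x | ⟪e, x⟫ < t}) ⊆ (frontier (U \ K) \ T) ∪ ((U \ K) ∩ H) :=
    frontier_inter_lt_subset (hU.sdiff hK) (by fun_prop) t
  have hslice : μH[d] ((U \ K) ∩ H) + μH[d] (K ∩ H) = μH[d] (U ∩ H) := by
    rw [← measure_sdiff_add_inter (U ∩ H) hK.measurableSet, inter_sdiff_right_comm,
      inter_right_comm, inter_eq_right.2 hKU]
  calc μH[d] (frontier ((U \ K) ∩ {x | ⟪e, x⟫ < t})) + μH[d] (K ∩ H)
      ≤ μH[d] (frontier (U \ K) \ T) + μH[d] ((U \ K) ∩ H) + μH[d] (K ∩ H) := by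
        refine add_le_add_left ?_ _
        exact (measure_mono hfr).trans (measure_union_le _ _)
    _ = μH[d] (frontier (U \ K) \ T) + μH[d] (U ∩ H) := by rw [add_assoc, hslice]
    _ ≤ μH[d] (frontier (U \ K) \ T) + μH[d] (frontier (U \ K) ∩ T) := by
        refine add_le_add_right ?_ _
        exact (hausdorffMeasure_inter_hyperplane_le hd he hU hUb t).trans
          (measure_mono (inter_subset_inter_left _ (frontier_subset_frontier_sdiff hU hK hKU)))
    _ = μH[d] (frontier (U \ K)) := measure_sdiff_add_inter _ hT

theorem exists_isOpen_subset_frontier_mul_lt (hd : 0 ≤ d) (he : ‖e‖ = 1) {U K : Set E}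
    (hU : IsOpen U) (hUb : Bornology.IsBounded U) (hK : IsClosed K) (hKU : K ⊆ U)
    {ν : Measure E} {t : ℝ} (hper : μH[d] (frontier (U \ K)) ≠ ∞) (hvol : ν (U \ K) ≠ ∞)
    (hcut : μH[d] (frontier (U \ K)) * ν ((U \ K) ∩ {x | t ≤ ⟪e, x⟫}) <
      μH[d] (K ∩ {x | ⟪e, x⟫ = t}) * ν (U \ K)) :
    ∃ D : Set E, IsOpen D ∧ D.Nonempty ∧ D ⊆ U \ K ∧
      μH[d] (frontier D) * ν (U \ K) < μH[d] (frontier (U \ K)) * ν D := by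
  set A := U \ K
  set D := A ∩ {x | ⟪e, x⟫ < t}
  have hA : IsOpen A := hU.sdiff hK
  have hD : IsOpen D := hA.inter (isOpen_lt (by fun_prop) continuous_const)
  have hgain : μH[d] (frontier D) + μH[d] (K ∩ {x | ⟪e, x⟫ = t}) ≤ μH[d] (frontier A) :=
    hausdorffMeasure_frontier_cut_add_le hd he hU hUb hK hKU t
  have hsplit : ν A ≤ ν D + ν (A ∩ {x | t ≤ ⟪e, x⟫}) := by
    refine (measure_mono fun x hx => ?_).trans (measure_union_le _ _)
    exact (lt_or_ge ⟪e, x⟫ t).imp (⟨hx, ·⟩) (⟨hx, ·⟩)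
  have hDfin : μH[d] (frontier A) * ν D ≠ ∞ :=
    ENNReal.mul_ne_top hper (ne_top_of_le_ne_top hvol (measure_mono inter_subset_left))
  have hlt : μH[d] (frontier D) * ν A < μH[d] (frontier A) * ν D := by
    refine lt_of_add_lt_add_right (a := μH[d] (K ∩ {x | ⟪e, x⟫ = t}) * ν A) ?_
    calc μH[d] (frontier D) * ν A + μH[d] (K ∩ {x | ⟪e, x⟫ = t}) * ν A
        ≤ μH[d] (frontier A) * (ν D + ν (A ∩ {x | t ≤ ⟪e, x⟫})) := by
          rw [← add_mul]; gcongr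
      _ = μH[d] (frontier A) * ν D + μH[d] (frontier A) * ν (A ∩ {x | t ≤ ⟪e, x⟫}) := mul_add _ _ _
      _ < μH[d] (frontier A) * ν D + μH[d] (K ∩ {x | ⟪e, x⟫ = t}) * ν A :=
          ENNReal.add_lt_add_left hDfin hcut
  have hDne : D.Nonempty := by
    rw [nonempty_iff_ne_empty]
    intro hempty
    simp [hempty] at hlt
  exact ⟨D, hD, hDne, inter_subset_left, hlt⟩

end Cut

section Sphere

open scoped Pointwise

variable {E : Type*} [NormedAddCommGroup E] [MeasurableSpace E] [BorelSpace E]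

theorem hausdorffMeasure_sphere [NormedSpace ℝ E] {d : ℝ} (hd : 0 ≤ d) (x : E) {R : ℝ}
    (hR : 0 < R) : μH[d] (sphere x R) = ‖R‖₊ ^ d • μH[d] (sphere (0 : E) 1) := by
  have hunit : x +ᵥ R • sphere (0 : E) 1 = sphere x R := by
    rw [smul_sphere' hR.ne', vadd_sphere, smul_zero, vadd_eq_add, add_zero, mul_one,
      Real.norm_of_nonneg hR.le]
  rw [← hunit, hausdorffMeasure_vadd _ (Or.inl hd), Measure.hausdorffMeasure_smul₀ hd hR.ne']

theorem exists_mem_nhds_hausdorffMeasure_image_lt_top {F : Type*} [NormedSpace ℝ E]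
    [NormedAddCommGroup F] [NormedSpace ℝ F] [FiniteDimensional ℝ F] {f : F → E} {y : F}
    (hf : ContDiffAt ℝ 1 f y) : ∃ U ∈ 𝓝 y, μH[Module.finrank ℝ F] (f '' U) < ∞ := by
  borelize F
  obtain ⟨C, U, hU, hlip⟩ := hf.exists_lipschitzOnWith
  refine ⟨U ∩ ball y 1, inter_mem hU (ball_mem_nhds y one_pos), ?_⟩
  refine ((hlip.mono inter_subset_left).hausdorffMeasure_image_le (Nat.cast_nonneg _)).trans_lt ?_
  exact ENNReal.mul_lt_top (ENNReal.rpow_lt_top_of_nonneg (Nat.cast_nonneg _) ENNReal.coe_ne_top)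
    ((measure_mono inter_subset_right).trans_lt measure_ball_lt_top)

variable [InnerProductSpace ℝ E] {n : ℕ} [Fact (Module.finrank ℝ E = n + 1)]

theorem hausdorffMeasure_unitSphere_lt_top : μH[n] (sphere (0 : E) 1) < ∞ := by
  have : FiniteDimensional ℝ E := .of_fact_finrank_eq_succ n
  refine (isCompact_sphere (0 : E) 1).measure_lt_top_of_nhdsWithin fun x hx => ?_
  let v : sphere (0 : E) 1 := -⟨x, hx⟩
  have hv : ‖(v : E)‖ = 1 := norm_eq_of_mem_sphere v
  let chart := (stereographic hv).symm
  have hchart : ContDiffAt ℝ 1 (fun w => (chart w : E)) (stereographic hv ⟨x, hx⟩) :=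
    (contDiff_stereoInvFunAux.comp (ℝ ∙ (v : E))ᗮ.subtypeL.contDiff).contDiffAt
  obtain ⟨U, hU, hfin⟩ := exists_mem_nhds_hausdorffMeasure_image_lt_top hchart
  rw [Submodule.finrank_orthogonal_span_singleton (n := n) (ne_zero_of_mem_unit_sphere v)] at hfin
  refine ⟨_, ?_, hfin⟩
  have hx_source : (⟨x, hx⟩ : sphere (0 : E) 1) ∈ (stereographic hv).source := by
    rw [stereographic_source, mem_compl_singleton_iff]
    exact ne_neg_of_mem_unit_sphere ℝ ⟨x, hx⟩
  have hnhds : map chart (𝓝 (stereographic hv ⟨x, hx⟩)) = 𝓝 ⟨x, hx⟩ := by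
    rw [(isOpenEmbedding_stereographic_symm hv).map_nhds_eq,
      (stereographic hv).left_inv hx_source]
  rw [← map_nhds_subtype_val (⟨x, hx⟩ : sphere (0 : E) 1), ← hnhds, map_map]
  exact image_mem_map hU

theorem hausdorffMeasure_sphere_lt_top (x : E) {R : ℝ} (hR : 0 < R) :
    μH[n] (sphere x R) < ∞ := by
  rw [hausdorffMeasure_sphere (Nat.cast_nonneg n) x hR]
  exact ENNReal.mul_lt_top ENNReal.coe_lt_top hausdorffMeasure_unitSphere_lt_top

end Sphere

section Ball

variable {E : Type*} [NormedAddCommGroup E] [InnerProductSpace ℝ E] {e : E}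

theorem ball_inter_halfSpace_subset_closedBall (he : ‖e‖ = 1) {t r R : ℝ} (hr : 0 ≤ r)
    (hR : 0 ≤ R) (h : 2 * R * (R - t) ≤ r ^ 2) :
    ball 0 R ∩ {x | t ≤ ⟪e, x⟫} ⊆ closedBall (R • e) r := by
  rintro x ⟨hx, hxt : t ≤ ⟪e, x⟫⟩
  rw [mem_ball_zero_iff] at hx
  have hexpand : ‖x - R • e‖ ^ 2 = ‖x‖ ^ 2 - 2 * R * ⟪e, x⟫ + R ^ 2 := by
    rw [norm_sub_sq_real, inner_smul_right, real_inner_comm, norm_smul, he, mul_one,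
      Real.norm_eq_abs, sq_abs, mul_assoc]
  have hsq : ‖x - R • e‖ ^ 2 ≤ r ^ 2 := by
    nlinarith [norm_nonneg x, mul_le_mul_of_nonneg_left hxt hR]
  rw [mem_closedBall_iff_norm]
  exact le_of_sq_le_sq hsq hr

variable [MeasurableSpace E] [BorelSpace E]

theorem isAddHaarMeasure_hausdorffMeasure_orthogonal {n : ℕ}
    [Fact (Module.finrank ℝ E = n + 1)] (he : e ≠ 0) :
    (μH[n] : Measure (ℝ ∙ e)ᗮ).IsAddHaarMeasure := by
  have : FiniteDimensional ℝ E := .of_fact_finrank_eq_succ n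
  rw [← Submodule.finrank_orthogonal_span_singleton (𝕜 := ℝ) (n := n) he]
  infer_instance

theorem le_hausdorffMeasure_closedBall_inter_hyperplane {n : ℕ}
    [Fact (Module.finrank ℝ E = n + 1)] (he : ‖e‖ = 1) {s t r R : ℝ} (hr : 0 ≤ r) (hR : 0 ≤ R)
    (h : r ^ 2 + (t - s) ^ 2 ≤ R ^ 2) :
    ENNReal.ofReal (r ^ n) * μH[n] (ball (0 : (ℝ ∙ e)ᗮ) 1) ≤
      μH[n] (closedBall (s • e) R ∩ {x | ⟪e, x⟫ = t}) := by
  have : FiniteDimensional ℝ E := .of_fact_finrank_eq_succ n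
  have he0 : e ≠ 0 := norm_ne_zero_iff.1 (by simp [he])
  have : (μH[n] : Measure (ℝ ∙ e)ᗮ).IsAddHaarMeasure :=
    isAddHaarMeasure_hausdorffMeasure_orthogonal he0
  have hscale : μH[n] (closedBall (0 : (ℝ ∙ e)ᗮ) r) =
      ENNReal.ofReal (r ^ n) * μH[n] (ball (0 : (ℝ ∙ e)ᗮ) 1) := by
    rw [Measure.addHaar_closedBall _ _ hr,
      Submodule.finrank_orthogonal_span_singleton (n := n) he0]
  have hisom : Isometry fun y : (ℝ ∙ e)ᗮ => t • e + (y : E) :=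
    (isometry_add_left (t • e)).comp isometry_subtype_coe
  rw [← hscale, ← hisom.hausdorffMeasure_image (Or.inl (Nat.cast_nonneg n))]
  refine measure_mono ?_
  rintro _ ⟨y, hy, rfl⟩
  rw [mem_closedBall_zero_iff, Submodule.coe_norm] at hy
  have hey : ⟪e, (y : E)⟫ = 0 := Submodule.mem_orthogonal_singleton_iff_inner_right.1 y.2
  have hnorm : ‖t • e + (y : E) - s • e‖ ^ 2 = (t - s) ^ 2 + ‖(y : E)‖ ^ 2 := by
    rw [add_sub_right_comm, ← sub_smul, norm_add_sq_real, inner_smul_left, hey, norm_smul, he]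
    simp
  refine ⟨?_, by simp [inner_add_right, inner_smul_right, he, hey]⟩
  rw [mem_closedBall_iff_norm]
  refine le_of_sq_le_sq ?_ hR
  calc ‖t • e + (y : E) - s • e‖ ^ 2 = (t - s) ^ 2 + ‖(y : E)‖ ^ 2 := hnorm
    _ ≤ (t - s) ^ 2 + r ^ 2 := by gcongr
    _ ≤ R ^ 2 := by rwa [add_comm]

theorem measure_ball_inter_halfSpace_le [FiniteDimensional ℝ E] (ν : Measure E)
    [ν.IsAddHaarMeasure] (he : ‖e‖ = 1) {t r R : ℝ} (hr : 0 ≤ r) (hR : 0 ≤ R)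
    (h : 2 * R * (R - t) ≤ r ^ 2) :
    ν (ball 0 R ∩ {x | t ≤ ⟪e, x⟫}) ≤
      ENNReal.ofReal (r ^ Module.finrank ℝ E) * ν (ball 0 1) :=
  (measure_mono (ball_inter_halfSpace_subset_closedBall he hr hR h)).trans
    (Measure.addHaar_closedBall ν _ hr).le

end Ball

section Annulus

variable {E : Type*} [NormedAddCommGroup E] [InnerProductSpace ℝ E] {e : E} {R₀ R₁ s : ℝ}

/-- The annulus between the spheres of radius `R₀` about `s • e` and of radius `R₁` about the
origin: the set `Om` over an arbitrary inner product space, with the hole written as a closed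
ball. -/
def eccentricAnnulus (e : E) (R₀ R₁ s : ℝ) : Set E := ball 0 R₁ \ closedBall (s • e) R₀

theorem ball_subset_eccentricAnnulus (he : ‖e‖ = 1) (hs : 0 ≤ s) (hR : 0 ≤ R₀ + R₁) :
    ball (-((R₀ + R₁) / 2) • e) ((R₁ - R₀) / 2) ⊆ eccentricAnnulus e R₀ R₁ s := by
  refine subset_sdiff.2 ⟨ball_subset_ball' ?_, (closedBall_disjoint_ball ?_).symm⟩
  · rw [dist_zero_right, norm_smul, he, norm_neg, Real.norm_of_nonneg (by positivity)]
    linarith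
  · rw [dist_eq_norm, ← sub_smul, norm_smul, he, Real.norm_of_nonneg (by linarith)]
    linarith

variable [MeasurableSpace E] [BorelSpace E]

theorem hausdorffMeasure_frontier_eccentricAnnulus_le {d : ℝ} (hd : 0 ≤ d) (hR₀ : 0 < R₀)
    (hR₁ : 0 < R₁) :
    μH[d] (frontier (eccentricAnnulus e R₀ R₁ s)) ≤
      μH[d] (sphere (0 : E) R₁) + μH[d] (sphere (0 : E) R₀) := by
  have hhole : μH[d] (sphere (0 : E) R₀) = μH[d] (sphere (s • e) R₀) := by
    rw [hausdorffMeasure_sphere hd 0 hR₀, hausdorffMeasure_sphere hd (s • e) hR₀]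
  rw [hhole, ← frontier_ball 0 hR₁.ne', ← frontier_closedBall (s • e) hR₀.ne']
  exact (measure_mono (frontier_sdiff_subset _ _)).trans (measure_union_le _ _)

-- The hyperplane at height `2 * (s + R₀) - R₁` lies at depth `δ := R₁ - R₀ - s` below the top of
-- the hole and `2 * δ` below the top of the outer ball, so both caps have width of order `√δ`.
theorem measure_eccentricAnnulus_inter_halfSpace_le [FiniteDimensional ℝ E] (ν : Measure E)
    [ν.IsAddHaarMeasure] (he : ‖e‖ = 1) (hR₁ : 0 ≤ R₁) (hs : s ≤ R₁ - R₀) :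
    ν (eccentricAnnulus e R₀ R₁ s ∩ {x | 2 * (s + R₀) - R₁ ≤ ⟪e, x⟫}) ≤
      ENNReal.ofReal (2 * √R₁ * √(R₁ - R₀ - s)) ^ Module.finrank ℝ E * ν (ball 0 1) := by
  rw [← ENNReal.ofReal_pow (by positivity)]
  refine (measure_mono (inter_subset_inter_left _ sdiff_subset)).trans
    (measure_ball_inter_halfSpace_le ν he (by positivity) hR₁ ?_)
  rw [mul_pow, mul_pow, Real.sq_sqrt hR₁, Real.sq_sqrt (sub_nonneg.2 hs)]
  linarith

theorem le_hausdorffMeasure_hole_inter_hyperplane {n : ℕ} [Fact (Module.finrank ℝ E = n + 1)]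
    (he : ‖e‖ = 1) (hR₀ : 0 ≤ R₀) (hs : s ∈ Icc (R₁ - 2 * R₀) (R₁ - R₀)) :
    ENNReal.ofReal (√R₀ * √(R₁ - R₀ - s)) ^ n * μH[n] (ball (0 : (ℝ ∙ e)ᗮ) 1) ≤
      μH[n] (closedBall (s • e) R₀ ∩ {x | ⟪e, x⟫ = 2 * (s + R₀) - R₁}) := by
  rw [← ENNReal.ofReal_pow (by positivity)]
  refine le_hausdorffMeasure_closedBall_inter_hyperplane he (by positivity) hR₀ ?_
  rw [mul_pow, Real.sq_sqrt hR₀, Real.sq_sqrt (sub_nonneg.2 hs.2)]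
  nlinarith [mul_nonneg (sub_nonneg.2 hs.1) (sub_nonneg.2 hs.2)]

theorem eventually_hausdorffMeasure_frontier_mul_cap_lt (ν : Measure E) [ν.IsAddHaarMeasure]
    {n : ℕ} [Fact (Module.finrank ℝ E = n + 1)] (he : ‖e‖ = 1) (hR₀ : 0 < R₀) (hR : R₀ < R₁) :
    ∀ᶠ s in 𝓝[<] (R₁ - R₀),
      μH[n] (frontier (eccentricAnnulus e R₀ R₁ s)) *
          ν (eccentricAnnulus e R₀ R₁ s ∩ {x | 2 * (s + R₀) - R₁ ≤ ⟪e, x⟫}) <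
        μH[n] (closedBall (s • e) R₀ ∩ {x | ⟪e, x⟫ = 2 * (s + R₀) - R₁}) *
          ν (eccentricAnnulus e R₀ R₁ s) := by
  have : FiniteDimensional ℝ E := .of_fact_finrank_eq_succ n
  have hrank : Module.finrank ℝ E = n + 1 := Fact.out
  have hR₁ : 0 < R₁ := hR₀.trans hR
  set P : ℝ≥0∞ := μH[n] (sphere (0 : E) R₁) + μH[n] (sphere (0 : E) R₀)
  set M : ℝ≥0∞ := μH[n] (ball (0 : (ℝ ∙ e)ᗮ) 1)
  set V : ℝ≥0∞ := ν (ball (-((R₀ + R₁) / 2) • e) ((R₁ - R₀) / 2))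
  have hP : P ≠ ∞ := (ENNReal.add_lt_top.2
    ⟨hausdorffMeasure_sphere_lt_top 0 hR₁, hausdorffMeasure_sphere_lt_top 0 hR₀⟩).ne
  have : (μH[n] : Measure (ℝ ∙ e)ᗮ).IsAddHaarMeasure :=
    isAddHaarMeasure_hausdorffMeasure_orthogonal (norm_ne_zero_iff.1 (by simp [he]))
  have hM : M ≠ 0 := (measure_ball_pos _ _ one_pos).ne'
  have hV : V ≠ 0 := (measure_ball_pos ν _ (by linarith)).ne'
  have hC : P * ν (ball 0 1) ≠ ∞ := ENNReal.mul_ne_top hP measure_ball_lt_top.ne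
  filter_upwards [(tendsto_sqrt_sub_nhdsGT_zero (R₁ - R₀)).eventually
      (eventually_mul_ofReal_mul_pow_succ_lt hC (mul_ne_zero hM hV)
        (by positivity : 0 ≤ 2 * √R₁) (Real.sqrt_pos.2 hR₀) n),
    Ioo_mem_nhdsLT (max_lt (sub_pos.2 hR) (by linarith : R₁ - 2 * R₀ < R₁ - R₀))]
    with s hlt ⟨hs, hsR⟩
  obtain ⟨hs0, hsR₀⟩ := max_lt_iff.1 hs
  calc μH[n] (frontier (eccentricAnnulus e R₀ R₁ s)) *
        ν (eccentricAnnulus e R₀ R₁ s ∩ {x | 2 * (s + R₀) - R₁ ≤ ⟪e, x⟫})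
      ≤ P * (ENNReal.ofReal (2 * √R₁ * √(R₁ - R₀ - s)) ^ (n + 1) * ν (ball 0 1)) :=
        mul_le_mul' (hausdorffMeasure_frontier_eccentricAnnulus_le n.cast_nonneg hR₀ hR₁)
          (hrank ▸ measure_eccentricAnnulus_inter_halfSpace_le ν he hR₁.le hsR.le)
    _ = P * ν (ball 0 1) * ENNReal.ofReal (2 * √R₁ * √(R₁ - R₀ - s)) ^ (n + 1) := by ring
    _ < M * V * ENNReal.ofReal (√R₀ * √(R₁ - R₀ - s)) ^ n := hlt
    _ = ENNReal.ofReal (√R₀ * √(R₁ - R₀ - s)) ^ n * M * V := by ring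
    _ ≤ μH[n] (closedBall (s • e) R₀ ∩ {x | ⟪e, x⟫ = 2 * (s + R₀) - R₁}) *
        ν (eccentricAnnulus e R₀ R₁ s) :=
        mul_le_mul' (le_hausdorffMeasure_hole_inter_hyperplane he hR₀.le ⟨hsR₀.le, hsR.le⟩)
          (measure_mono (ball_subset_eccentricAnnulus he hs0.le (by linarith)))

theorem stmt19_general [FiniteDimensional ℝ E] (ν : Measure E) [ν.IsAddHaarMeasure]
    (he : ‖e‖ = 1) (hR₀ : 0 < R₀) (hR : R₀ < R₁) :
    ∀ᶠ s in 𝓝[<] (R₁ - R₀), ∃ D : Set E,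
      IsOpen D ∧ D.Nonempty ∧ D ⊆ eccentricAnnulus e R₀ R₁ s ∧
      μH[(Module.finrank ℝ E : ℝ) - 1] (frontier D) * ν (eccentricAnnulus e R₀ R₁ s) <
        μH[(Module.finrank ℝ E : ℝ) - 1] (frontier (eccentricAnnulus e R₀ R₁ s)) * ν D := by
  have : Nontrivial E := ⟨e, 0, norm_ne_zero_iff.1 (by simp [he])⟩
  obtain ⟨n, hn⟩ := Nat.exists_eq_add_one.2 (Module.finrank_pos (R := ℝ) (M := E))
  have : Fact (Module.finrank ℝ E = n + 1) := ⟨hn⟩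
  have hR₁ : 0 < R₁ := hR₀.trans hR
  rw [hn, Nat.cast_add_one, add_sub_cancel_right]
  filter_upwards [eventually_hausdorffMeasure_frontier_mul_cap_lt ν (n := n) he hR₀ hR,
    Ioo_mem_nhdsLT (sub_pos.2 hR)] with s hcut ⟨hs0, hs⟩
  have hhole : closedBall (s • e) R₀ ⊆ ball 0 R₁ := by
    refine closedBall_subset_ball' ?_
    rw [dist_zero_right, norm_smul, he, mul_one, Real.norm_of_nonneg hs0.le]
    linarith
  have hper : μH[n] (frontier (eccentricAnnulus e R₀ R₁ s)) < ∞ :=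
    (hausdorffMeasure_frontier_eccentricAnnulus_le n.cast_nonneg hR₀ hR₁).trans_lt
      (ENNReal.add_lt_top.2
        ⟨hausdorffMeasure_sphere_lt_top 0 hR₁, hausdorffMeasure_sphere_lt_top 0 hR₀⟩)
  have hvol : ν (eccentricAnnulus e R₀ R₁ s) ≠ ∞ :=
    measure_ne_top_of_subset sdiff_subset measure_ball_lt_top.ne
  exact exists_isOpen_subset_frontier_mul_lt n.cast_nonneg he isOpen_ball isBounded_ball
    isClosed_closedBall hhole hper.ne hvol hcut

end Annulus

theorem norm_e1 {N : ℕ} (hN : N ≠ 0) : ‖e1 N‖ = 1 := by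
  obtain ⟨n, rfl⟩ := Nat.exists_eq_succ_of_ne_zero hN
  simp [e1, EuclideanSpace.norm_eq]

theorem Om_eq_eccentricAnnulus {N : ℕ} {R₀ R₁ s : ℝ} (hR₀ : R₀ ≠ 0) :
    Om N R₀ R₁ s = eccentricAnnulus (e1 N) R₀ R₁ s := by
  rw [Om, eccentricAnnulus, closure_ball _ hR₀]

theorem stmt19 (N : ℕ) (hN : 2 ≤ N) (R₀ R₁ : ℝ) (hR₀ : 0 < R₀) (hR : R₀ < R₁) :
    ∃ s ∈ Set.Ioo 0 (R₁ - R₀), ∃ D : Set (EuclideanSpace ℝ (Fin N)),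
      IsOpen D ∧ D.Nonempty ∧ D ⊆ Om N R₀ R₁ s ∧
      μH[(N : ℝ) - 1] (frontier D) * volume (Om N R₀ R₁ s) <
        μH[(N : ℝ) - 1] (frontier (Om N R₀ R₁ s)) * volume D := by
  obtain ⟨s, hs, D, hD⟩ := (Filter.Eventually.and (Ioo_mem_nhdsLT (sub_pos.2 hR))
    (stmt19_general volume (norm_e1 (by lia : N ≠ 0)) hR₀ hR)).exists
  refine ⟨s, hs, D, ?_⟩
  simpa only [Om_eq_eccentricAnnulus hR₀.ne', finrank_euclideanSpace_fin] using hD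
end
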